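/- arXiv:0706.3397 — 5 statements merged into one kernel-verified Lean document; each statement's English description precedes it below -/
import Mathlib

section
/- Let n ≥ 3 be an integer and μ > 0 a real number. The real symmetric 2×2 matrix A = [[2nμ, 2n³μ], [2n³μ, 2n²μ² + n⁴(n−1)μ]] is positive semidefinite if and only if μ ≥ n²(n+1)/2. -/
theorem rhpwn_nogo_matrix_psd_iff (n : ℕ) (hn : 3 ≤ n) (μ : ℝ) (hμ : 0 < μ) :
    (Matrix.of ![![2 * n * μ, 2 * n ^ 3 * μ],
                 ![2 * n ^ 3 * μ, 2 * n ^ 2 * μ ^ 2 + n ^ 4 * (n - 1) * μ]]).PosSemidef ↔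
      μ ≥ n ^ 2 * (n + 1) / 2 := by
  have hn' : (0 : ℝ) < n := by
    have : 0 < n := by omega
    exact_mod_cast this
  generalize (n : ℝ) = m at *
  constructor
  · intro h
    have h1 := h.det_nonneg
    rw [Matrix.det_fin_two] at h1
    simp only [Matrix.of_apply, Matrix.cons_val_zero, Matrix.cons_val_one] at h1
    have h2 : 0 ≤ (2 * m ^ 3 * μ ^ 2) * (2 * μ - m ^ 2 - m ^ 3) := by
      refine h1.trans_eq ?_
      ring
    have h3 := nonneg_of_mul_nonneg_right h2 (by positivity)
    linarith
  · intro h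
    apply Matrix.PosSemidef.of_dotProduct_mulVec_nonneg
    · ext i j
      fin_cases i <;> fin_cases j <;> simp
    · intro x
      simp only [Matrix.mulVec, dotProduct, Fin.sum_univ_two, Matrix.of_apply,
        Matrix.cons_val_zero, Matrix.cons_val_one, Pi.star_apply, star_trivial]
      have h3 : 0 ≤ 2 * μ - m ^ 2 - m ^ 3 := by linarith
      have h4 : 0 ≤ 2 * m * μ * (x 0 + m ^ 2 * x 1) ^ 2
          + m ^ 2 * μ * (2 * μ - m ^ 2 - m ^ 3) * x 1 ^ 2 := by positivity
      refine h4.trans_eq ?_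
      ring
end

section
/- Let V be a complex vector space, Φ ∈ V, n ≥ 1 an integer, μ > 0 a real number, and let B⁺, B⁻, N be linear endomorphisms of V such that: B⁻Φ = 0; B⁻∘B⁺ − B⁺∘B⁻ = n²·N; and N((B⁺)ᵏΦ) = (μ/n + k·n·(n−1))·(B⁺)ᵏΦ for every integer k ≥ 0. Then for every integer k ≥ 0, B⁻((B⁺)^{k+1}Φ) = n·(k+1)·(μ + k·n²(n−1)/2)·(B⁺)ᵏΦ. -/
theorem trhpwn_annihilation_action (V : Type*) [AddCommGroup V] [Module ℂ V] (Φ : V)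
    (n : ℕ) (hn : 1 ≤ n) (μ : ℝ) (hμ : 0 < μ)
    (Bp Bm N : Module.End ℂ V)
    (h0 : Bm Φ = 0)
    (hcomm : Bm * Bp - Bp * Bm = ((n : ℂ) ^ 2) • N)
    (hN : ∀ k : ℕ, N ((Bp ^ k) Φ) = ((μ / n + k * n * (n - 1) : ℝ) : ℂ) • (Bp ^ k) Φ) :
    ∀ k : ℕ, Bm ((Bp ^ (k + 1)) Φ) =
      ((n * (k + 1) * (μ + k * (n ^ 2 * (n - 1)) / 2) : ℝ) : ℂ) • (Bp ^ k) Φ := by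
  have hn' : (n : ℂ) ≠ 0 := by
    exact_mod_cast (by omega : n ≠ 0)
  have key : ∀ v : V, Bm (Bp v) = Bp (Bm v) + ((n : ℂ) ^ 2) • N v := by
    intro v
    have h := LinearMap.congr_fun hcomm v
    simp only [LinearMap.sub_apply, Module.End.mul_apply, LinearMap.smul_apply] at h
    rw [← h]
    abel
  intro k
  induction k with
  | zero =>
    have h := hN 0
    rw [pow_succ', Module.End.mul_apply, key, h, smul_smul]
    simp only [pow_zero, Module.End.one_apply, h0, map_zero, zero_add]
    congr 1
    push_cast
    field_simp
    ring
  | succ k ih =>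
    rw [pow_succ', Module.End.mul_apply, key, ih, hN, smul_smul, map_smul,
      ← Module.End.mul_apply, ← pow_succ', ← add_smul]
    congr 1
    push_cast
    field_simp
    ring
end

section
/- Let 𝒜 be a complex star-algebra and let B : ℕ × ℕ × [0, ∞) → 𝒜 be a family of elements satisfying, for all n, k, N, K ∈ ℕ and all t, s ≥ 0: (i) (B(n, k, t))* = B(k, n, t); (ii) if k·N = K·n then B(n, k, t)·B(N, K, s) = B(N, K, s)·B(n, k, t), and if n + N ≥ 1 and k + K ≥ 1 then B(n, k, t)·B(N, K, s) − B(N, K, s)·B(n, k, t) = (k·N − K·n)·B(n+N−1, k+K−1, min(t, s)). Let Λ be a finite subset of ℕ × ℕ such that (n, k) ∈ Λ implies (k, n) ∈ Λ, and let c : Λ → ℂ satisfy c(n, k) = conj(c(k, n)) for all (n, k) ∈ Λ. Define x(t) := ∑_{(n,k)∈Λ} c(n, k)·B(n, k, t). Then for all t, s ≥ 0: x(t)* = x(t) and x(t)·x(s) = x(s)·x(t). -/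
theorem rhpwn_classical_process (A : Type*) [Ring A] [Algebra ℂ A] [StarRing A]
    [StarModule ℂ A]
    (B : ℕ → ℕ → ℝ → A)
    (hstar : ∀ (n k : ℕ) (t : ℝ), 0 ≤ t → star (B n k t) = B k n t)
    (hcomm0 : ∀ (n k N K : ℕ) (t s : ℝ), 0 ≤ t → 0 ≤ s → k * N = K * n →
      B n k t * B N K s = B N K s * B n k t)
    (hcomm : ∀ (n k N K : ℕ) (t s : ℝ), 0 ≤ t → 0 ≤ s → 1 ≤ n + N → 1 ≤ k + K →
      B n k t * B N K s - B N K s * B n k t =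
        ((k * N - K * n : ℤ) : ℂ) • B (n + N - 1) (k + K - 1) (min t s))
    (Λ : Finset (ℕ × ℕ)) (hΛ : ∀ p ∈ Λ, (p.2, p.1) ∈ Λ)
    (c : ℕ × ℕ → ℂ) (hc : ∀ p ∈ Λ, c p = (starRingEnd ℂ) (c (p.2, p.1)))
    (x : ℝ → A) (hx : ∀ t : ℝ, x t = ∑ p ∈ Λ, c p • B p.1 p.2 t) :
    ∀ t s : ℝ, 0 ≤ t → 0 ≤ s → star (x t) = x t ∧ x t * x s = x s * x t := by
  intro t s ht hs
  constructor
  · rw [hx, star_sum]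
    refine Finset.sum_bij' (fun p _ => (p.2, p.1)) (fun p _ => (p.2, p.1)) hΛ hΛ
      (fun _ _ => rfl) (fun _ _ => rfl) ?_
    intro p hp
    rw [star_smul, hstar _ _ _ ht, hc p hp]
    simp
  · have key : ∀ p q : ℕ × ℕ,
        B p.1 p.2 t * B q.1 q.2 s - B q.1 q.2 s * B p.1 p.2 t
          = -(B q.1 q.2 t * B p.1 p.2 s - B p.1 p.2 s * B q.1 q.2 t) := by
      rintro ⟨n, k⟩ ⟨N, K⟩
      by_cases h : k * N = K * n
      · simp only
        rw [hcomm0 n k N K t s ht hs h, hcomm0 N K n k t s ht hs h.symm]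
        simp
      · have h1 : 1 ≤ n + N := by
          by_contra h'
          obtain ⟨rfl, rfl⟩ : n = 0 ∧ N = 0 := by omega
          simp at h
        have h2 : 1 ≤ k + K := by
          by_contra h'
          obtain ⟨rfl, rfl⟩ : k = 0 ∧ K = 0 := by omega
          simp at h
        simp only
        rw [hcomm n k N K t s ht hs h1 h2,
          hcomm N K n k t s ht hs (by omega) (by omega), add_comm N n, add_comm K k, ← neg_smul]
        congr 1
        push_cast
        ring
    have e1 : x t * x s - x s * x t = ∑ p ∈ Λ, ∑ q ∈ Λ,
        (c p * c q) • (B p.1 p.2 t * B q.1 q.2 s - B q.1 q.2 s * B p.1 p.2 t) := by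
      rw [hx, hx, Finset.sum_mul_sum, Finset.sum_mul_sum,
        Finset.sum_comm (f := fun i j => c i • B i.1 i.2 s * c j • B j.1 j.2 t),
        ← Finset.sum_sub_distrib]
      refine Finset.sum_congr rfl fun p _ => ?_
      rw [← Finset.sum_sub_distrib]
      refine Finset.sum_congr rfl fun q _ => ?_
      rw [smul_mul_smul_comm, smul_mul_smul_comm, mul_comm (c q), smul_sub]
    have e2 : x t * x s - x s * x t = -(x t * x s - x s * x t) := by
      conv_rhs => rw [e1, Finset.sum_comm]
      rw [e1, ← Finset.sum_neg_distrib]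
      refine Finset.sum_congr rfl fun p _ => ?_
      rw [← Finset.sum_neg_distrib]
      refine Finset.sum_congr rfl fun q _ => ?_
      rw [key p q, smul_neg, mul_comm (c p)]
    have e3 : (2 : ℂ) • (x t * x s - x s * x t) = 0 := by
      rw [two_smul]
      exact add_eq_zero_iff_eq_neg.mpr e2
    have e4 := (smul_eq_zero.mp e3).resolve_left two_ne_zero
    exact sub_eq_zero.mp e4
end

section
/- For t > 0, define p_t : ℝ → ℝ by p_t(x) = (2^{t−2}/(π·Γ(t))) · ‖Γ((t + ix)/2)‖², where Γ is the complex Gamma function (so that p_t(x) = (2^{t−1}/(2π))·β((t+ix)/2, (t−ix)/2) with β(a, c) = Γ(a)Γ(c)/Γ(a+c), since Γ((t−ix)/2) = conj(Γ((t+ix)/2)) and Γ(t) > 0). Then for every real s with |s| < π/2, the function x ↦ e^{sx}·p_t(x) is integrable on ℝ and ∫_{−∞}^{∞} e^{sx}·p_t(x) dx = (cos s)^{−t}. -/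
open MeasureTheory
open Set Filter Topology

lemma aux_expint (σ c : ℝ) (hσ : 0 < σ) (hc : 0 < c) :
    Integrable (fun v : ℝ => Real.exp (-σ * v) * Real.exp (-c * Real.exp (-v))) ∧
    ∫ v : ℝ, Real.exp (-σ * v) * Real.exp (-c * Real.exp (-v)) = (1 / c) ^ σ * Real.Gamma σ := by
  have hd : ∀ x ∈ (univ : Set ℝ), HasDerivWithinAt (fun v => Real.exp (-v)) (-Real.exp (-x)) univ x := by
    intro x _
    have := (hasDerivAt_neg x).exp
    simp at this
    exact this.hasDerivWithinAt
  have hinj : univ.InjOn (fun v : ℝ => Real.exp (-v)) := by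
    intro a _ b _ h
    simpa using h
  have him : (fun v : ℝ => Real.exp (-v)) '' univ = Ioi 0 := by
    ext y; constructor
    · rintro ⟨v, -, rfl⟩; exact Real.exp_pos _
    · intro hy; exact ⟨-Real.log y, mem_univ _, by simp [Real.exp_log hy]⟩
  have key : ∀ v : ℝ, |-Real.exp (-v)| • (Real.exp (-v) ^ (σ - 1) * Real.exp (-(c * Real.exp (-v))))
      = Real.exp (-σ * v) * Real.exp (-c * Real.exp (-v)) := by
    intro v
    rw [abs_neg, abs_of_pos (Real.exp_pos _), ← Real.exp_mul, smul_eq_mul, ← mul_assoc, ← Real.exp_add]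
    ring_nf
  constructor
  · have h := integrableOn_rpow_mul_exp_neg_mul_rpow (p := 1) (s := σ - 1) (b := c) (by linarith) zero_lt_one hc
    rw [← him, integrableOn_image_iff_integrableOn_abs_deriv_smul MeasurableSet.univ hd hinj] at h
    rw [integrableOn_univ] at h
    refine h.congr (ae_of_all _ fun v => ?_)
    simp only [Real.rpow_one]
    rw [← key v]; simp
  · rw [← Real.integral_rpow_mul_exp_neg_mul_Ioi hσ hc, ← him,
      integral_image_eq_integral_abs_deriv_smul MeasurableSet.univ hd hinj]
    simp only [key, Measure.restrict_univ]
open FourierTransform SchwartzMap in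
lemma aux_plancherel (f : ℝ → ℂ) (hf : Integrable f) (hf2 : MemLp f 2) :
    Integrable (fun ξ => ‖𝓕 f ξ‖ ^ 2) ∧ ∫ ξ, ‖𝓕 f ξ‖ ^ 2 = ∫ x, ‖f x‖ ^ 2 := by
  set F : Lp (α := ℝ) ℂ 2 volume := hf2.toLp f with hF
  have hcont : Continuous (𝓕 f) :=
    VectorFourier.fourierIntegral_continuous Real.continuous_fourierChar continuous_inner hf
  have hae : ∀ᵐ x, 𝓕 f x = (𝓕 F : Lp (α := ℝ) ℂ 2 volume) x := by
    apply ae_eq_of_integral_contDiff_smul_eq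
    · exact hcont.locallyIntegrable
    · exact (Lp.memLp _).locallyIntegrable (by norm_num)
    · intro g g_smooth g_cpt
      have hg₁ : HasCompactSupport (Complex.ofRealCLM ∘ g) := g_cpt.comp_left rfl
      have hg₂ : ContDiff ℝ (⊤ : ℕ∞) (Complex.ofRealCLM ∘ g) := by fun_prop
      set G : 𝓢(ℝ, ℂ) := hg₁.toSchwartzMap hg₂ with hG
      have e1 : ∫ x, g x • 𝓕 f x = ∫ x, (𝓕 G) x • f x := by
        have := VectorFourier.integral_fourierIntegral_smul_eq_flip (L := innerₗ ℝ)
          Real.continuous_fourierChar continuous_inner (G.integrable (μ := volume)) hf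
        have h2 : ∫ x, 𝓕 (G : ℝ → ℂ) x • f x = ∫ x, G x • 𝓕 f x := by
          simpa using! this
        rw [SchwartzMap.fourier_coe, h2]
        rfl
      have e2 : ∫ x, g x • (𝓕 F : Lp (α := ℝ) ℂ 2 volume) x = ∫ x, (𝓕 G) x • F x := by
        have h := congrArg (fun T => T G) (Lp.fourier_toTemperedDistribution_eq F)
        simp only [TemperedDistribution.fourier_apply, Lp.toTemperedDistribution_apply] at h
        rw [h]
        rfl
      rw [e1, e2]
      apply integral_congr_ae
      filter_upwards [hf2.coeFn_toLp] with x hx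
      rw [hx]
  have hmem : MemLp (𝓕 f) 2 := (memLp_congr_ae hae).2 (Lp.memLp _)
  refine ⟨(memLp_two_iff_integrable_sq_norm hmem.1).1 hmem, ?_⟩
  have hn : ∀ K : Lp (α := ℝ) ℂ 2 volume, ∫ x, ‖K x‖ ^ 2 = ‖K‖ ^ 2 := by
    intro K
    have h1 := @inner_self_eq_norm_sq_to_K ℂ _ _ _ _ K
    rw [L2.inner_def] at h1
    simp only [inner_self_eq_norm_sq_to_K] at h1
    have h2 : ((∫ x, ‖K x‖ ^ 2 : ℝ) : ℂ) = ((‖K‖ ^ 2 : ℝ) : ℂ) := by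
      rw [← integral_complex_ofReal]
      push_cast
      exact h1
    exact_mod_cast h2
  calc ∫ ξ, ‖𝓕 f ξ‖ ^ 2 = ∫ ξ, ‖(𝓕 F : Lp (α := ℝ) ℂ 2 volume) ξ‖ ^ 2 := by
        apply integral_congr_ae
        filter_upwards [hae] with x hx
        rw [hx]
    _ = ∫ ξ, ‖F ξ‖ ^ 2 := by rw [hn, hn, Lp.norm_fourier_eq]
    _ = _ := by
        apply integral_congr_ae
        filter_upwards [hf2.coeFn_toLp] with x hx
        rw [hx]

lemma aux_gamma (z : ℂ) (hz : 0 < z.re) (a : ℂ) (ha : 0 < a.re) :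
    ∫ u : ℝ in Ioi 0, (u : ℂ) ^ (z - 1) * Complex.exp (-(a * u)) = (1 / a) ^ z * Complex.Gamma z := by
  have hopen : IsOpen {a : ℂ | 0 < a.re} := isOpen_lt continuous_const Complex.continuous_re
  have hnorm : ∀ (w b : ℂ) (u : ℝ), 0 < u →
      ‖(u : ℂ) ^ w * Complex.exp (-(b * u))‖ = u ^ w.re * Real.exp (-b.re * u ^ (1:ℝ)) := by
    intro w b u hu
    rw [norm_mul, Complex.norm_cpow_eq_rpow_re_of_pos hu, Complex.norm_exp]
    simp
  have hmeas : ∀ w b : ℂ, AEStronglyMeasurable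
      (fun u : ℝ => (u : ℂ) ^ w * Complex.exp (-(b * u))) (volume.restrict (Ioi 0)) := by
    intro w b
    refine ContinuousOn.aestronglyMeasurable ?_ measurableSet_Ioi
    intro u hu
    apply ContinuousAt.continuousWithinAt
    have : ContinuousAt (fun u : ℝ => (u : ℂ) ^ w) u :=
      Complex.continuousAt_ofReal_cpow_const u w (Or.inr (ne_of_gt hu))
    fun_prop
  have hint : ∀ w b : ℂ, -1 < w.re → 0 < b.re → IntegrableOn
      (fun u : ℝ => (u : ℂ) ^ w * Complex.exp (-(b * u))) (Ioi 0) := by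
    intro w b hw hb
    have h := integrableOn_rpow_mul_exp_neg_mul_rpow (p := 1) hw zero_lt_one hb
    refine Integrable.mono' h (hmeas w b) ?_
    filter_upwards [ae_restrict_mem measurableSet_Ioi] with u hu
    exact (hnorm w b u hu).le
  have hL : DifferentiableOn ℂ (fun a : ℂ => ∫ u : ℝ in Ioi 0, (u : ℂ) ^ (z - 1) * Complex.exp (-(a * u)))
      {a : ℂ | 0 < a.re} := by
    intro a₀ ha₀
    have ha₀' : 0 < a₀.re := ha₀
    have hs : {b : ℂ | a₀.re / 2 < b.re} ∈ 𝓝 a₀ :=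
      (isOpen_lt continuous_const Complex.continuous_re).mem_nhds (by simp; linarith)
    have := hasDerivAt_integral_of_dominated_loc_of_deriv_le (𝕜 := ℂ) (μ := volume.restrict (Ioi (0:ℝ)))
      (F := fun (a : ℂ) (u : ℝ) => (u : ℂ) ^ (z - 1) * Complex.exp (-(a * u)))
      (F' := fun (a : ℂ) (u : ℝ) => (-(u:ℂ)) * ((u : ℂ) ^ (z - 1) * Complex.exp (-(a * u))))
      (bound := fun u : ℝ => u ^ z.re * Real.exp (-(a₀.re / 2) * u ^ (1:ℝ)))
      hs (Eventually.of_forall fun b => hmeas _ b)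
      (hint _ _ (by simp; linarith) ha₀')
      ((by fun_prop : Continuous fun u : ℝ => -(u:ℂ)).aestronglyMeasurable.mul (hmeas _ _)) ?_ ?_ ?_
    · exact this.2.differentiableAt.differentiableWithinAt
    · filter_upwards [ae_restrict_mem measurableSet_Ioi] with u hu b hb
      have hu' : (0:ℝ) < u := hu
      have hb' : a₀.re / 2 < b.re := hb
      rw [norm_mul, hnorm _ _ _ hu, norm_neg, Complex.norm_real, Real.norm_eq_abs, abs_of_pos hu',
        ← mul_assoc]
      have : u * u ^ (z - 1).re = u ^ z.re := by
        nth_rewrite 1 [← Real.rpow_one u]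
        rw [← Real.rpow_add hu']; simp
      rw [this, Real.rpow_one]
      gcongr
    · exact integrableOn_rpow_mul_exp_neg_mul_rpow (p := 1) (by linarith) zero_lt_one (by linarith)
    · refine ae_of_all _ fun u b _ => ?_
      have h1 : HasDerivAt (fun b : ℂ => -(b * u)) (-(u:ℂ)) b := by
        simpa using ((hasDerivAt_id b).mul_const (u:ℂ)).fun_neg
      have := h1.cexp.const_mul ((u : ℂ) ^ (z - 1))
      refine this.congr_deriv ?_
      ring
  have hR : DifferentiableOn ℂ (fun a : ℂ => (1 / a) ^ z * Complex.Gamma z) {a : ℂ | 0 < a.re} := by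
    intro b hb
    have hb' : 0 < b.re := hb
    have hb0 : b ≠ 0 := by rintro rfl; simp at hb'
    have : (1 / b) ∈ Complex.slitPlane := by
      left
      rw [one_div, Complex.inv_re]
      exact div_pos hb' (Complex.normSq_pos.2 hb0)
    have h1 : DifferentiableAt ℂ (fun b : ℂ => 1 / b) b := by
      fun_prop (disch := assumption)
    exact ((h1.cpow_const this).mul_const _).differentiableWithinAt
  have hconv : IsPreconnected {a : ℂ | 0 < a.re} := (convex_halfSpace_re_gt 0).isPreconnected
  refine AnalyticOnNhd.eqOn_of_preconnected_of_frequently_eq (z₀ := 1) (hL.analyticOnNhd hopen)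
    (hR.analyticOnNhd hopen) hconv (by simp) ?_ ha
  have htend : Tendsto (fun r : ℝ => (r : ℂ)) (𝓝[≠] 1) (𝓝[≠] 1) := by
    apply tendsto_nhdsWithin_of_tendsto_nhds_of_eventually_within
    · have : ContinuousAt (fun r : ℝ => (r : ℂ)) 1 := by fun_prop
      have h := this.tendsto
      simp only [Complex.ofReal_one] at h
      exact h.mono_left nhdsWithin_le_nhds
    · filter_upwards [self_mem_nhdsWithin] with r hr
      simpa using hr
  apply htend.frequently
  apply Eventually.frequently
  filter_upwards [nhdsWithin_le_nhds (lt_mem_nhds (zero_lt_one (α := ℝ)))] with r hr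
  exact Complex.integral_cpow_mul_exp_neg_mul_Ioi hz hr

open FourierTransform in
theorem continuous_binomial_mgf (t : ℝ) (ht : 0 < t) (p : ℝ → ℝ)
    (hp : ∀ x : ℝ, p x = 2 ^ (t - 2) / (Real.pi * Real.Gamma t) *
        ‖Complex.Gamma ((t + x * Complex.I) / 2)‖ ^ 2) :
    ∀ s : ℝ, |s| < Real.pi / 2 →
      Integrable (fun x : ℝ => Real.exp (s * x) * p x) ∧
      ∫ x : ℝ, Real.exp (s * x) * p x = Real.cos s ^ (-t) := by
  intro s hs
  have hpi := Real.pi_pos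
  obtain ⟨hs1, hs2⟩ := abs_lt.1 hs
  have hcos : 0 < Real.cos s := Real.cos_pos_of_mem_Ioo ⟨by linarith, hs2⟩
  have hG := Real.Gamma_pos_of_pos ht
  set a : ℂ := Complex.exp (s * Complex.I) with ha
  have hare : a.re = Real.cos s := by rw [ha, Complex.exp_ofReal_mul_I_re]
  have hinv : 1 / a = Complex.exp ((-s : ℝ) * Complex.I) := by
    rw [ha, one_div, ← Complex.exp_neg]; push_cast; ring_nf
  let g : ℝ → ℂ := fun v => Real.exp (-(t / 2) * v) • Complex.exp (-(a * Real.exp (-v)))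
  have hgc : Continuous g := by fun_prop
  have hgn : ∀ v, ‖g v‖ = Real.exp (-(t / 2) * v) * Real.exp (-Real.cos s * Real.exp (-v)) := by
    intro v
    simp only [g]
    rw [norm_smul, Real.norm_eq_abs, abs_of_pos (Real.exp_pos _), Complex.norm_exp]
    simp [← hare, -Complex.ofReal_exp, -Complex.ofReal_neg]
  have hgn2 : ∀ v, ‖g v‖ ^ 2 = Real.exp (-t * v) * Real.exp (-(2 * Real.cos s) * Real.exp (-v)) := by
    intro v
    rw [hgn, mul_pow, ← Real.exp_nat_mul, ← Real.exp_nat_mul]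
    push_cast; ring_nf
  have hg1 : Integrable g := by
    refine (integrable_norm_iff hgc.aestronglyMeasurable).1 ?_
    simp only [hgn]
    exact (aux_expint (t / 2) _ (by linarith) hcos).1
  obtain ⟨hi2, hv2⟩ := aux_expint t (2 * Real.cos s) ht (by linarith)
  have hg2 : MemLp g 2 := by
    rw [memLp_two_iff_integrable_sq_norm hgc.aestronglyMeasurable]
    simpa only [hgn2] using hi2
  obtain ⟨hP1, hP2⟩ := aux_plancherel g hg1 hg2
  simp only [hgn2] at hP2
  rw [hv2] at hP2
  have hF : ∀ x : ℝ, ‖𝓕 g (x / (4 * Real.pi))‖ ^ 2 =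
      Real.exp (s * x) * ‖Complex.Gamma ((t + x * Complex.I) / 2)‖ ^ 2 := by
    intro x
    have hre : ((t + x * Complex.I) / 2 : ℂ).re = t / 2 := by simp
    have him : ((t + x * Complex.I) / 2 : ℂ).im = x / 2 := by simp
    have hm := mellin_eq_fourier (fun u : ℝ => Complex.exp (-(a * u))) (s := (t + x * Complex.I) / 2)
    rw [hre, him, mellin] at hm
    simp only [smul_eq_mul] at hm
    rw [aux_gamma _ (by rw [hre]; linarith) a (by rw [hare]; exact hcos)] at hm
    have hx : x / (4 * Real.pi) = x / 2 / (2 * Real.pi) := by field_simp; norm_num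
    rw [hx]
    have hm' : 𝓕 g (x / 2 / (2 * Real.pi)) = _ := hm.symm
    rw [hm', norm_mul, mul_pow, hinv, Complex.norm_cpow_of_ne_zero (Complex.exp_ne_zero _),
      Complex.norm_exp_ofReal_mul_I, Real.one_rpow, Complex.arg_exp_mul_I, him,
      (toIocMod_eq_self _).2 ⟨by linarith, by linarith⟩, one_div, ← Real.exp_neg, ← Real.exp_nat_mul]
    congr 2
    push_cast; ring
  have hfun : (fun x : ℝ => Real.exp (s * x) * p x) = fun x =>
      2 ^ (t - 2) / (Real.pi * Real.Gamma t) * ‖𝓕 g (x / (4 * Real.pi))‖ ^ 2 := by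
    ext x; rw [hF, hp]; ring
  rw [hfun]
  constructor
  · exact (hP1.comp_div (by positivity : (4 * Real.pi) ≠ 0)).const_mul _
  · rw [integral_const_mul, Measure.integral_comp_div (fun y => ‖𝓕 g y‖ ^ 2), hP2,
      abs_of_pos (by positivity), one_div, Real.inv_rpow (by positivity),
      Real.mul_rpow (by norm_num) hcos.le, Real.rpow_sub (by norm_num), Real.rpow_neg hcos.le]
    have h1 : (0:ℝ) < 2 ^ t := by positivity
    have h2 : 0 < Real.cos s ^ t := by positivity
    simp only [smul_eq_mul]
    field_simp
    norm_num
end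

section
/- Let σₖ, ρₖ : ℝ → ℂ (k = 0, 1, 2, …) be functions with σ₀ = ρ₀ = 1 (the constant function 1), and suppose that for every integer n ≥ 1 and every t ∈ ℝ: (n+1)·ρₙ(t) = n·σ₁(t)·ρ_{n−1}(t) and (n+1)·ρₙ(t) = conj(σ_{n−1}(t))·σ₁(t). Then: (a) σ₁ is real-valued; (b) for every n ≥ 0 and every t, ρₙ(t) = σ₁(t)ⁿ/(n+1); and (c) for every n ≥ 1 and every t with σ₁(t) ≠ 0, conj(σ_{n−1}(t)) = σ₁(t)^{n−1}. -/
theorem rhpwn_vacuum_action_compatibility (σ ρ : ℕ → ℝ → ℂ)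
    (hσ0 : ∀ t : ℝ, σ 0 t = 1) (hρ0 : ∀ t : ℝ, ρ 0 t = 1)
    (h1 : ∀ n : ℕ, 1 ≤ n → ∀ t : ℝ,
      (n + 1 : ℂ) * ρ n t = n * σ 1 t * ρ (n - 1) t)
    (h2 : ∀ n : ℕ, 1 ≤ n → ∀ t : ℝ,
      (n + 1 : ℂ) * ρ n t = (starRingEnd ℂ) (σ (n - 1) t) * σ 1 t) :
    (∀ t : ℝ, (σ 1 t).im = 0) ∧
    (∀ (n : ℕ) (t : ℝ), ρ n t = σ 1 t ^ n / (n + 1)) ∧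
    (∀ n : ℕ, 1 ≤ n → ∀ t : ℝ, σ 1 t ≠ 0 →
      (starRingEnd ℂ) (σ (n - 1) t) = σ 1 t ^ (n - 1)) := by
  have hb : ∀ (n : ℕ) (t : ℝ), ρ n t = σ 1 t ^ n / (n + 1) := by
    intro n t
    induction n with
    | zero => simp [hρ0]
    | succ k ih =>
      have h := h1 (k + 1) (by omega) t
      have e1 : ((k : ℂ) + 1) ≠ 0 := by exact_mod_cast Nat.succ_ne_zero k
      have e2 : (((k + 1 : ℕ) : ℂ) + 1) ≠ 0 := by exact_mod_cast Nat.succ_ne_zero (k + 1)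
      rw [Nat.add_sub_cancel, ih] at h
      rw [eq_div_iff e2, mul_comm, h]
      push_cast
      field_simp
      ring
  have hc : ∀ n : ℕ, 1 ≤ n → ∀ t : ℝ, σ 1 t ≠ 0 →
      (starRingEnd ℂ) (σ (n - 1) t) = σ 1 t ^ (n - 1) := by
    intro n hn t ht
    have h := h2 n hn t
    have e1 : ((n : ℂ) + 1) ≠ 0 := by exact_mod_cast Nat.succ_ne_zero n
    rw [hb n t, mul_div_cancel₀ _ e1] at h
    apply mul_right_cancel₀ ht
    rw [← h, ← pow_succ, Nat.sub_add_cancel hn]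
  refine ⟨fun t => ?_, hb, hc⟩
  by_cases ht : σ 1 t = 0
  · simp [ht]
  · have h := hc 2 (by norm_num) t ht
    norm_num at h
    exact Complex.conj_eq_iff_im.mp h
end
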